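/- For every integer n > 8750, there exists an n-good set S of size at least |S| ≥ 1.01^n / (16(60n² + 1)). -/

import Mathlib

/-!
Each letter has two images under the substitution `h`, of lengths 24 and 25, and no block of an
image starts inside another one. Therefore a square in an image of a square-free word could only
meet three consecutive blocks, which is excluded by computation. The same holds for `p v p` if `v`
is such an image in a suitable frame, and choosing between the two images of each letter
gives exponentially many nice words `v` of each length `n ≥ 566`.

In `p u p v p l` with nice `u`, `v` of length `n`, the words `p̂` and its mirror image occur only
inside the copies of `p`. This forces every square to have period `n + 39`, and then `v` consists of
a prefix of `l` and a suffix of `u`. Hence only `O(n²)` words conflict with a given nice word `u`,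
and a directed graph in which all out-degrees are at most `d` has an independent set containing at
least one vertex in `2 d + 1`.
-/

/-- A word is *square-free* if it contains no factor of the form `u ++ u`
with `u` nonempty. -/
def SqFree {α : Type*} (w : List α) : Prop :=
  ∀ u : List α, u ≠ [] → ¬ (u ++ u) <:+: w

/-- The word `p̂ = 1202120121021201021`. -/
def phat : List (Fin 3) := [1,2,0,2,1,2,0,1,2,1,0,2,1,2,0,1,0,2,1]

/-- The palindrome `p = mirror(p̂) ++ 0 ++ p̂`. -/
def pal : List (Fin 3) := phat.reverse ++ 0 :: phat

/-- The number of occurrences of a (nonempty) word `u` as a factor of `v`. -/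
def occCount (u v : List (Fin 3)) : ℕ :=
  (List.range v.length).countP (fun i => (v.drop i).take u.length == u)

/-- A word `v` is *nice* if `p v p` is square-free and contains exactly two
occurrences of `p̂` and exactly two occurrences of its mirror image. -/
def IsNice (v : List (Fin 3)) : Prop :=
  SqFree (pal ++ v ++ pal) ∧ occCount phat (pal ++ v ++ pal) = 2 ∧
    occCount phat.reverse (pal ++ v ++ pal) = 2

/-- `lword n` is the lexicographically least nice word of length `n`
(the empty word if no nice word of length `n` exists). -/
noncomputable def lword (n : ℕ) : List (Fin 3) := by
  classical
  exact if h : {w : List (Fin 3) | IsNice w ∧ w.length = n}.Nonempty then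
    Set.IsWF.min
      (Set.Finite.isWF
        ((List.finite_length_eq (Fin 3) n).subset (fun _ hw => hw.2))) h
  else []

/-- A set of words is *mirror-free* if it does not contain both a word and its
(distinct) mirror image. -/
def MirrorFree (S : Set (List (Fin 3))) : Prop :=
  ∀ w ∈ S, w ≠ w.reverse → w.reverse ∉ S

/-- `S` is an `n`-good set: a mirror-free set of nice words of length `n` such that
for all `i ∈ {2n+100, …, 7n}` and all distinct `u v ∈ S`, the words
`p u p v p lᵢ`, `p ū p v p lᵢ`, `p u p v̄ p l̄ᵢ` and `p ū p v̄ p l̄ᵢ` are square-free. -/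
def GoodSet (n : ℕ) (S : Set (List (Fin 3))) : Prop :=
  (∀ w ∈ S, IsNice w ∧ w.length = n) ∧ MirrorFree S ∧
    ∀ i : ℕ, 2 * n + 100 ≤ i → i ≤ 7 * n → ∀ u ∈ S, ∀ v ∈ S, u ≠ v →
      SqFree (pal ++ u ++ pal ++ v ++ pal ++ lword i) ∧
      SqFree (pal ++ u.reverse ++ pal ++ v ++ pal ++ lword i) ∧
      SqFree (pal ++ u ++ pal ++ v.reverse ++ pal ++ (lword i).reverse) ∧
      SqFree (pal ++ u.reverse ++ pal ++ v.reverse ++ pal ++ (lword i).reverse)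

/-- `mirrorIf r w` is the mirror image of `w` if `r = true`, and `w` itself otherwise. -/
def mirrorIf (r : Bool) (w : List (Fin 3)) : List (Fin 3) :=
  if r then w.reverse else w

/-- The nondeterministic substitution `h`. -/
def himg : Fin 3 → Set (List (Fin 3)) :=
  ![{[0,1,2,1,0,2,1,2,0,2,1,0,2,0,1,0,2,1,2,0,1,2,1,0],
     [0,1,2,1,0,2,1,2,0,2,1,0,2,0,1,2,0,2,1,2,0,1,2,1,0]},
    {[1,2,0,2,1,0,2,0,1,0,2,1,0,1,2,1,0,2,0,1,2,0,2,1],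
     [1,2,0,2,1,0,2,0,1,0,2,1,0,1,2,0,1,0,2,0,1,2,0,2,1]},
    {[2,0,1,0,2,1,0,1,2,1,0,2,1,2,0,2,1,0,1,2,0,1,0,2],
     [2,0,1,0,2,1,0,1,2,1,0,2,1,2,0,1,2,1,0,1,2,0,1,0,2]}]

/-- `v` is an image of `w` under the substitution `h`: `v` is obtained by replacing
each letter `c` of `w` by some word of `himg c`. -/
def IsImage (w v : List (Fin 3)) : Prop :=
  ∃ vs : List (List (Fin 3)), List.Forall₂ (fun c u => u ∈ himg c) w vs ∧ v = vs.flatten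

/-! ### Occurrences and squares -/

section Occurrences

variable {α : Type*} {u v w : List α} {i j k q s : ℕ}

/-- The word `u` occurs in `w` at position `j` (positions are counted from `0`). -/
def OccursAt (u w : List α) (j : ℕ) : Prop := u <+: w.drop j

theorem occursAt_iff_getElem? :
    OccursAt u w j ↔ ∀ i < u.length, w[j + i]? = u[i]? := by
  simp only [OccursAt, List.prefix_iff_getElem?, List.getElem?_drop]
  exact forall₂_congr fun i hi ↦ by rw [List.getElem?_eq_getElem hi]

theorem occursAt_length (a u b : List α) : OccursAt u (a ++ u ++ b) a.length := by
  rw [OccursAt, List.append_assoc, List.drop_left]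
  exact List.prefix_append u b

namespace OccursAt

theorem add_length_le (h : OccursAt u w j) (hu : u ≠ []) : j + u.length ≤ w.length := by
  have := List.IsPrefix.length_le h
  have := List.length_pos_iff.mpr hu
  rw [List.length_drop] at *
  lia

theorem isInfix (h : OccursAt u w j) : u <:+: w :=
  (List.IsPrefix.isInfix h).trans (List.drop_suffix j w).isInfix

theorem reverse (h : OccursAt u w j) (hi : j + u.length + i = w.length) :
    OccursAt u.reverse w.reverse i := by
  obtain ⟨b, hb⟩ := h
  obtain rfl : i = b.length := by
    have := congrArg List.length hb
    rw [List.length_append, List.length_drop] at this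
    lia
  rw [← w.take_append_drop j, ← hb, List.reverse_append, List.reverse_append,
    ← List.length_reverse (as := b)]
  exact occursAt_length b.reverse u.reverse (w.take j).reverse

theorem take (h : OccursAt u w j) (k : ℕ) : OccursAt (u.take k) w j :=
  (List.take_prefix k u).trans h

theorem drop (h : OccursAt u w j) (k : ℕ) : OccursAt (u.drop k) w (j + k) := by
  rw [OccursAt, ← List.drop_drop]
  exact List.IsPrefix.drop h k

theorem eq_of_length (hu : OccursAt u w j) (hv : OccursAt v w j) (hl : u.length = v.length) :
    u = v :=
  (List.prefix_of_prefix_length_le hu hv hl.le).eq_of_length hl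

theorem rtake (h : OccursAt u w j) (hk : k ≤ u.length) :
    OccursAt (u.rtake k) w (j + u.length - k) := by
  rw [List.rtake, Nat.add_sub_assoc hk]
  exact h.drop _

theorem trans (hu : OccursAt u v i) (hv : OccursAt v w j) : OccursAt u w (j + i) :=
  List.IsPrefix.trans hu (hv.drop i)

theorem of_occursAt (hu : OccursAt u w (j + i)) (hv : OccursAt v w j)
    (hl : i + u.length ≤ v.length) : OccursAt u v i :=
  List.prefix_of_prefix_length_le hu (hv.drop i) (by rw [List.length_drop]; lia)

theorem of_append_right (h : OccursAt u (v ++ w) j) (hl : j + u.length ≤ v.length) :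
    OccursAt u v j :=
  .of_occursAt (j := 0) (by rwa [zero_add]) (List.prefix_append v w) hl

end OccursAt

theorem occursAt_append_length_add : OccursAt u (v ++ w) (v.length + i) ↔ OccursAt u w i := by
  rw [OccursAt, ← List.drop_drop, List.drop_left, OccursAt]

theorem occursAt_append_append {x : List α} (hu : u.length ≤ v.length)
    (h : OccursAt u (x ++ v ++ w) j) :
    OccursAt u (x ++ v) j ∨ ∃ i, j = x.length + i ∧ OccursAt u (v ++ w) i := by
  rcases le_total (j + u.length) (x ++ v).length with hle | hle
  · exact .inl (h.of_append_right hle)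
  · rw [List.length_append] at hle
    obtain ⟨i, rfl⟩ := Nat.exists_eq_add_of_le (show x.length ≤ j by lia)
    rw [List.append_assoc, occursAt_append_length_add] at h
    exact .inr ⟨i, rfl, h⟩

/-- The word `w` has a square of period `q` at position `s`. -/
def SquareAt (w : List α) (s q : ℕ) : Prop :=
  0 < q ∧ s + 2 * q ≤ w.length ∧ ∀ i, s ≤ i → i < s + q → w[i]? = w[i + q]?

theorem sqFree_iff_forall_not_squareAt : SqFree w ↔ ∀ s q, ¬ SquareAt w s q := by
  constructor
  · rintro h s q ⟨hq, hl, he⟩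
    refine h ((w.drop s).take q) ?_ ?_
    · rw [← List.length_pos_iff, List.length_take, List.length_drop]
      lia
    · refine OccursAt.isInfix (j := s) (occursAt_iff_getElem?.mpr fun i hi ↦ ?_)
      simp only [List.length_append, List.length_take, List.length_drop] at hi
      rw [List.getElem?_append, List.length_take, List.length_drop]
      split_ifs with hiq
      · rw [List.getElem?_take_of_lt (by lia), List.getElem?_drop]
      · rw [List.getElem?_take_of_lt (by lia), List.getElem?_drop,
          he (s + (i - min q (w.length - s))) (by lia) (by lia)]
        congr 1
        lia
  · rintro h u hu ⟨a, b, rfl⟩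
    refine h a.length u.length ⟨List.length_pos_iff.mpr hu, by grind, fun i hi hi' ↦ ?_⟩
    obtain ⟨i, rfl⟩ := Nat.exists_eq_add_of_le hi
    have hu₁ := occursAt_length a u (u ++ b)
    have hu₂ := occursAt_length (a ++ u) u b
    simp only [List.append_assoc, List.length_append, occursAt_iff_getElem?] at hu₁ hu₂ ⊢
    rw [hu₁ i (by lia), add_right_comm, hu₂ i (by lia)]

namespace SquareAt

theorem occursAt_add_iff (h : SquareAt w s q) (hs : s ≤ j) (he : j + u.length ≤ s + q) :
    OccursAt u w (j + q) ↔ OccursAt u w j := by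
  simp only [occursAt_iff_getElem?]
  refine forall₂_congr fun i hi ↦ ?_
  rw [h.2.2 (j + i) (by lia) (by lia), add_right_comm]

theorem eq_of_occursAt (h : SquareAt w s q) (hs : s ≤ j) (he : j + u.length ≤ s + q)
    (hu : OccursAt u w j) (hv : OccursAt v w (j + q)) (hl : u.length = v.length) : u = v :=
  ((h.occursAt_add_iff hs he).mpr hu).eq_of_length hv hl

theorem of_occursAt (h : SquareAt w (j + s) q) (hu : OccursAt u w j)
    (hl : s + 2 * q ≤ u.length) : SquareAt u s q := by
  refine ⟨h.1, hl, fun i hi hi' ↦ ?_⟩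
  rw [occursAt_iff_getElem?] at hu
  rw [← hu _ (by lia), ← hu _ (by lia), ← add_assoc, h.2.2 _ (by lia) (by lia)]

end SquareAt

theorem sqFree_nil : SqFree ([] : List α) :=
  fun u hu h ↦ hu (by simpa using h)

theorem SqFree.of_isInfix (h : SqFree w) (hv : v <:+: w) : SqFree v :=
  fun u hu hsq ↦ h u hu (hsq.trans hv)

theorem SqFree.lt_of_squareAt (hu : SqFree u) (hocc : OccursAt u w j) (h : SquareAt w s q)
    (hs : j ≤ s) : j + u.length < s + 2 * q := by
  obtain ⟨t, rfl⟩ := Nat.exists_eq_add_of_le hs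
  by_contra! hle
  exact sqFree_iff_forall_not_squareAt.mp hu t q (h.of_occursAt hocc (by lia))

theorem SqFree.reverse (h : SqFree w) : SqFree w.reverse := by
  intro u hu hsq
  refine h u.reverse (by simpa) ?_
  rwa [← List.reverse_infix, List.reverse_append, List.reverse_reverse]

theorem SqFree.cons {a : α} (hw : SqFree w) (ha : a ∉ w) : SqFree (a :: w) := by
  rintro (_ | ⟨b, u⟩) hu hsq
  · exact hu rfl
  rcases List.infix_cons_iff.mp hsq with h | h
  · rw [List.cons_append, List.cons_prefix_cons] at h
    exact ha (h.1 ▸ h.2.mem (by simp))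
  · exact hw _ hu h

theorem SqFree.append_singleton {a : α} (hw : SqFree w) (ha : a ∉ w) : SqFree (w ++ [a]) := by
  simpa using (hw.reverse.cons (by simpa)).reverse

theorem SqFree.map {β : Type*} {f : α → β} (hf : f.Injective) (hw : SqFree w) :
    SqFree (w.map f) := by
  rw [sqFree_iff_forall_not_squareAt] at hw ⊢
  refine fun s q ⟨hq, hsq, h⟩ ↦ hw s q ⟨hq, by rwa [List.length_map] at hsq, fun i hi hi' ↦ ?_⟩
  apply Option.map_injective hf
  simpa using h i hi hi'

theorem SqFree.isChain_ne (hw : SqFree w) : w.IsChain (· ≠ ·) := by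
  refine List.isChain_iff_getElem.mpr fun i hi h ↦ sqFree_iff_forall_not_squareAt.mp hw i 1
    ⟨one_pos, hi, fun j hj hj' ↦ ?_⟩
  obtain rfl : j = i := by lia
  rw [List.getElem?_eq_getElem (by lia), List.getElem?_eq_getElem hi, h]

end Occurrences

/-! ### Substitutions preserving square-freeness -/

section Substitution

variable {α β ι : Type*} {adj : β → β → Prop} {word : β → List α} {L : List β} {i j k q s : ℕ}

/-- The position at which the `i`-th block starts in the concatenation of the blocks `word x`,
for `x` running through `L`. -/
def blockPos (word : β → List α) (L : List β) (i : ℕ) : ℕ := ((L.take i).flatMap word).length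

theorem blockPos_of_length_le (h : L.length ≤ i) :
    blockPos word L i = (L.flatMap word).length := by
  rw [blockPos, List.take_of_length_le h]

theorem blockPos_succ (hi : i < L.length) :
    blockPos word L (i + 1) = blockPos word L i + (word L[i]).length := by
  rw [blockPos, List.take_succ_eq_append_getElem hi, List.flatMap_append, List.length_append,
    List.flatMap_singleton, blockPos]

theorem blockPos_add (i k : ℕ) : blockPos word L (i + k) =
    blockPos word L i + (((L.drop i).take k).flatMap word).length := by
  rw [blockPos, List.take_add, List.flatMap_append, List.length_append, blockPos]

theorem blockPos_mono : Monotone (blockPos word L) := by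
  intro i j hij
  exact (List.IsPrefix.flatMap (List.take_prefix_take_left hij) word).length_le

theorem blockPos_lt_blockPos (hw : ∀ x, word x ≠ []) (hij : i < j) (hi : i < L.length) :
    blockPos word L i < blockPos word L j := by
  have := blockPos_mono (word := word) (L := L) (Nat.succ_le_of_lt hij)
  have := List.length_pos_iff.mpr (hw L[i])
  rw [Nat.succ_eq_add_one, blockPos_succ hi] at *
  lia

theorem blockPos_inj (hw : ∀ x, word x ≠ []) (hi : i ≤ L.length) (hj : j ≤ L.length) :
    blockPos word L i = blockPos word L j ↔ i = j := by
  refine ⟨fun h ↦ ?_, congrArg _⟩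
  rcases lt_trichotomy i j with hij | hij | hij
  · exact absurd h (blockPos_lt_blockPos hw hij (by lia)).ne
  · exact hij
  · exact absurd h (blockPos_lt_blockPos hw hij (by lia)).ne'

theorem lt_of_blockPos_lt (h : blockPos word L i < blockPos word L j) : i < j :=
  lt_of_not_ge fun hji ↦ (blockPos_mono hji).not_gt h

theorem exists_blockPos_le_lt (hk : k < (L.flatMap word).length) :
    ∃ i, ∃ _ : i < L.length, blockPos word L i ≤ k ∧ k < blockPos word L (i + 1) := by
  classical
  have hex : ∃ i, k < blockPos word L (i + 1) :=
    ⟨L.length, by rwa [blockPos_of_length_le (Nat.le_succ _)]⟩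
  have hle : blockPos word L (Nat.find hex) ≤ k := by
    rcases hi : Nat.find hex with _ | i
    · exact Nat.zero_le k
    · exact not_lt.mp (Nat.find_min hex (hi ▸ Nat.lt_succ_self i))
  refine ⟨Nat.find hex, lt_of_blockPos_lt (hle.trans_lt ?_), hle, Nat.find_spec hex⟩
  rwa [blockPos_of_length_le le_rfl]

theorem occursAt_blockPos (i k : ℕ) :
    OccursAt (((L.drop i).take k).flatMap word) (L.flatMap word) (blockPos word L i) := by
  have := occursAt_length ((L.take i).flatMap word) (((L.drop i).take k).flatMap word)
    (((L.drop i).drop k).flatMap word)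
  rwa [List.append_assoc, ← List.flatMap_append, ← List.flatMap_append, List.take_append_drop,
    List.take_append_drop] at this

theorem occursAt_getElem (hi : i < L.length) :
    OccursAt (word L[i]) (L.flatMap word) (blockPos word L i) := by
  simpa [List.take_one_drop_eq_of_lt_length hi] using occursAt_blockPos (word := word) (L := L) i 1

/-- The blocks `word x` are *synchronizing* along `adj`: none of them is a proper factor of
another one, and in the concatenation of two adjacent blocks no block starts strictly inside the
first one. This makes the block structure of a concatenation recognizable from its letters. -/
structure Synchronizing (adj : β → β → Prop) (word : β → List α) : Prop where
  ne_nil : ∀ x, word x ≠ []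
  eq_of_isInfix : ∀ x y, word x <:+: word y → word x = word y
  eq_zero_of_occursAt : ∀ x y z, adj y z → ∀ o < (word y).length,
    OccursAt (word x) (word y ++ word z) o → o = 0

namespace Synchronizing

theorem exists_blockPos_eq (h : Synchronizing adj word) (hL : L.IsChain adj) {x : β}
    (hx : OccursAt (word x) (L.flatMap word) j) :
    ∃ i, ∃ _ : i < L.length, blockPos word L i = j ∧ word L[i] = word x := by
  have hxl := List.length_pos_iff.mpr (h.ne_nil x)
  have hjx := hx.add_length_le (h.ne_nil x)
  obtain ⟨i, hi, hij, hji⟩ := exists_blockPos_le_lt (word := word) (L := L) (k := j) (by lia)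
  obtain ⟨o, rfl⟩ := Nat.exists_eq_add_of_le hij
  have hi' := occursAt_getElem (word := word) hi
  rw [blockPos_succ hi] at hji
  have inside (hle : o + (word x).length ≤ (word L[i]).length) :
      ∃ i', ∃ _ : i' < L.length, blockPos word L i' = blockPos word L i + o ∧
        word L[i'] = word x := by
    have := h.eq_of_isInfix _ _ (hx.of_occursAt hi' hle).isInfix
    exact ⟨i, hi, by rw [this] at hle; lia, this.symm⟩
  by_cases hi₁ : i + 1 < L.length
  · have hpair : OccursAt (word L[i] ++ word L[i + 1]) (L.flatMap word) (blockPos word L i) := by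
      have := occursAt_blockPos (word := word) (L := L) i 2
      rwa [List.drop_eq_getElem_cons hi, List.drop_eq_getElem_cons hi₁, List.take_succ_cons,
        List.take_succ_cons, List.take_zero, List.flatMap_cons, List.flatMap_cons,
        List.flatMap_nil, List.append_nil] at this
    have hi₁' := occursAt_getElem (word := word) hi₁
    rw [blockPos_succ hi] at hi₁'
    rcases le_total (o + (word x).length) ((word L[i]).length + (word L[i + 1]).length)
      with hle | hle
    · obtain rfl := h.eq_zero_of_occursAt x _ _ (List.isChain_iff_getElem.mp hL i hi₁) o
        (by lia) (hx.of_occursAt hpair (by rwa [List.length_append]))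
      refine ⟨i, hi, rfl, ?_⟩
      rcases le_total (word x).length (word L[i]).length with hxi | hxi
      · exact (h.eq_of_isInfix _ _ (hx.of_occursAt hi' (by lia)).isInfix).symm
      · exact h.eq_of_isInfix _ _ (OccursAt.of_occursAt (i := 0) hi' hx (by lia)).isInfix
    · have := h.eq_of_isInfix _ _ (OccursAt.of_occursAt (u := word L[i + 1])
        (i := (word L[i]).length - o) (by convert hi₁' using 1; lia) hx (by lia)).isInfix
      exact inside (by rw [this] at hle; lia)
  · have : blockPos word L (i + 1) = _ := blockPos_of_length_le (by lia)
    rw [blockPos_succ hi] at this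
    exact inside (by lia)

theorem exists_blockPos_add (h : Synchronizing adj word) (hL : L.IsChain adj)
    (hsq : SquareAt (L.flatMap word) s q) (hi : i < L.length) (hs : s ≤ blockPos word L i)
    (he : blockPos word L (i + 1) ≤ s + q) :
    ∃ j, ∃ _ : j < L.length, blockPos word L j = blockPos word L i + q ∧
      blockPos word L (j + 1) = blockPos word L (i + 1) + q ∧ word L[j] = word L[i] := by
  rw [blockPos_succ hi] at he ⊢
  obtain ⟨j, hj, hji, hw⟩ :=
    h.exists_blockPos_eq hL ((hsq.occursAt_add_iff hs he).mpr (occursAt_getElem hi))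
  exact ⟨j, hj, hji, by rw [blockPos_succ hj, hji, hw]; lia, hw⟩

theorem exists_blockPos_sub (h : Synchronizing adj word) (hL : L.IsChain adj)
    (hsq : SquareAt (L.flatMap word) s q) (hi : i < L.length) (hs : s + q ≤ blockPos word L i)
    (he : blockPos word L (i + 1) ≤ s + 2 * q) :
    ∃ j, ∃ _ : j < L.length, blockPos word L j + q = blockPos word L i ∧
      blockPos word L (j + 1) + q = blockPos word L (i + 1) := by
  rw [blockPos_succ hi] at he ⊢
  have hocc := occursAt_getElem (word := word) hi
  rw [← Nat.sub_add_cancel (show q ≤ blockPos word L i by lia),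
    hsq.occursAt_add_iff (by lia) (by lia)] at hocc
  obtain ⟨j, hj, hji, hw⟩ := h.exists_blockPos_eq hL hocc
  exact ⟨j, hj, by lia, by rw [blockPos_succ hj, hji, hw]; lia⟩

/- `a` and `b` are the blocks containing the first letters of the two halves of the square. -/
variable {a b : ℕ}

theorem le_blockPos_add_two (h : Synchronizing adj word) (hL : L.IsChain adj)
    (hsq : SquareAt (L.flatMap word) s q) (hsa : blockPos word L a ≤ s)
    (hbq : s + q < blockPos word L (b + 1)) (hab : b ≤ a + 1) :
    s + 2 * q ≤ blockPos word L (b + 2) := by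
  by_contra! hlt
  have hb : b + 1 < L.length := by
    by_contra! hle
    rw [blockPos_of_length_le (by lia)] at hlt
    exact hlt.not_ge hsq.2.1
  obtain ⟨j, -, hj, hj'⟩ := h.exists_blockPos_sub hL hsq hb hbq.le hlt.le
  have : a < j := lt_of_blockPos_lt (word := word) (L := L) (by lia)
  have : j + 1 < b + 1 := lt_of_blockPos_lt (word := word) (L := L) (by lia)
  lia

theorem eq_succ_of_blockPos_eq (h : Synchronizing adj word) (hL : L.IsChain adj)
    (hsq : SquareAt (L.flatMap word) s q) (hsa : blockPos word L a ≤ s)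
    (hqa : blockPos word L (a + 1) ≤ s + q) (has : s < blockPos word L (a + 1))
    (hqb : blockPos word L b ≤ s + q) (hbq : s + q < blockPos word L (b + 1)) (hj : j < L.length)
    (hja : blockPos word L j = blockPos word L (a + 1) + q) : j = b + 1 := by
  have hbj : b < j := by
    by_contra! hjb
    have : blockPos word L j ≤ blockPos word L b := blockPos_mono hjb
    lia
  by_contra hne
  obtain ⟨j, rfl⟩ : ∃ j', j = j' + 1 := ⟨j - 1, by lia⟩
  have hbj' : blockPos word L (b + 1) ≤ blockPos word L j := blockPos_mono (by lia)
  obtain ⟨k, hkL, hk, hk'⟩ := h.exists_blockPos_sub hL hsq (i := j) (by lia) (by lia) (by lia)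
  have hak : a < k := lt_of_blockPos_lt (word := word) (L := L) (by lia)
  have := blockPos_lt_blockPos (L := L) h.ne_nil (Nat.succ_lt_succ hak) (by lia)
  lia

theorem getElem_add_sub (h : Synchronizing adj word) (hL : L.IsChain adj)
    (hsq : SquareAt (L.flatMap word) s q) (hsa : blockPos word L a ≤ s)
    (has : s < blockPos word L (a + 1)) (hqb : blockPos word L b ≤ s + q)
    (hbq : s + q < blockPos word L (b + 1)) (hi : a < i) (hib : i < b) (hb : b < L.length) :
    ∃ _ : i + (b - a) < L.length, blockPos word L (i + (b - a)) = blockPos word L i + q ∧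
      blockPos word L (i + (b - a) + 1) = blockPos word L (i + 1) + q ∧
      word L[i + (b - a)] = word L[i] := by
  have hmono {i j : ℕ} (hij : i ≤ j) : blockPos word L i ≤ blockPos word L j :=
    blockPos_mono hij
  obtain ⟨j, hj, hji, hji', hw⟩ := h.exists_blockPos_add hL hsq (i := i) (by lia)
    (has.le.trans (hmono hi)) ((hmono hib).trans hqb)
  obtain rfl : j = i + (b - a) := by
    clear hji' hw
    induction i, Nat.succ_le_of_lt hi using Nat.le_induction generalizing j with
    | base =>
      have := h.eq_succ_of_blockPos_eq hL hsq hsa ((hmono hib.le).trans hqb) has hqb hbq hj hji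
      lia
    | succ i hai ih =>
      obtain ⟨j', hj', hji₁, hji₂, -⟩ := h.exists_blockPos_add hL hsq (i := i) (by lia)
        (has.le.trans (hmono hai)) ((hmono hib.le).trans hqb)
      have := ih hai (by lia) j' hj' hji₁
      have := (blockPos_inj h.ne_nil hj.le hj').mp (hji.trans hji₂.symm)
      lia
  exact ⟨hj, hji, hji', hw⟩

end Synchronizing

/-- The label of a block can be read off from its first `m` letters, and also from its last `m`
letters; moreover these two parts of a block do not overlap. -/
structure LabelReadable (word : β → List α) (label : β → ι) (m : ℕ) : Prop where
  two_mul_le_length : ∀ x, 2 * m ≤ (word x).length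
  eq_of_take_eq : ∀ x y, (word x).take m = (word y).take m → label x = label y
  eq_of_rtake_eq : ∀ x y, (word x).rtake m = (word y).rtake m → label x = label y

namespace LabelReadable

variable {label : β → ι} {m a b c : ℕ}

/- In the next two lemmas, the `a`-th and the `b`-th block contain the first letters of the two
halves of a square. At least half of the `b`-th block is repeated, either in the `a`-th or in the
`c`-th block. -/

theorem label_eq_or_label_eq (h : LabelReadable word label m)
    (hsq : SquareAt (L.flatMap word) s q) (hlt : a < b) (hb : b < L.length)
    (has : s < blockPos word L (a + 1)) (hqb : blockPos word L b ≤ s + q)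
    (hbq : s + q < blockPos word L (b + 1))
    (hab : blockPos word L (b + 1) = blockPos word L (a + 1) + q)
    (hbc : blockPos word L c = blockPos word L b + q) :
    label L[a] = label L[b] ∨ ∃ _ : c < L.length, label L[b] = label L[c] := by
  have ha : a < L.length := hlt.trans hb
  have hmono : blockPos word L (a + 1) ≤ blockPos word L b := blockPos_mono hlt
  have hla := h.two_mul_le_length L[a]
  have hlb := h.two_mul_le_length L[b]
  rw [blockPos_succ hb] at hab hbq
  rw [blockPos_succ ha] at hab hmono has
  rcases le_or_gt (s + m) (blockPos word L a + (word L[a]).length) with hm | hm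
  · have hsuf := (occursAt_getElem (word := word) ha).rtake (show m ≤ _ by lia)
    have hsuf' := (occursAt_getElem (word := word) hb).rtake (show m ≤ _ by lia)
    rw [hab, Nat.sub_add_comm (by lia)] at hsuf'
    refine .inl (h.eq_of_rtake_eq _ _ (hsq.eq_of_occursAt (by lia) ?_ hsuf hsuf' ?_)) <;>
      simp only [List.rtake, List.length_drop] <;> lia
  · have hcL : c < L.length := by
      by_contra! hle
      rw [blockPos_of_length_le hle] at hbc
      have := hsq.2.1
      lia
    have hlc := h.two_mul_le_length L[c]
    have hpre := (occursAt_getElem (word := word) hb).take m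
    have hpre' := (occursAt_getElem (word := word) hcL).take m
    rw [hbc] at hpre'
    refine .inr ⟨hcL, h.eq_of_take_eq _ _ (hsq.eq_of_occursAt (by lia) ?_ hpre hpre' ?_)⟩ <;>
      simp only [List.length_take] <;> lia

theorem not_squareAt (h : LabelReadable word label m) (hw : Synchronizing adj word)
    (hL : L.IsChain adj) (hlabel : SqFree (L.map label)) (hab : a + 1 < b) (hb : b < L.length)
    (hsa : blockPos word L a ≤ s) (has : s < blockPos word L (a + 1))
    (hqb : blockPos word L b ≤ s + q) (hbq : s + q < blockPos word L (b + 1)) :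
    ¬ SquareAt (L.flatMap word) s q := by
  intro hsq
  have hshift {i : ℕ} (hi : a < i) (hib : i < b) :=
    hw.getElem_add_sub hL hsq hsa has hqb hbq hi hib hb
  obtain ⟨hlast, -, hbc, -⟩ := hshift (i := b - 1) (by lia) (by lia)
  obtain ⟨-, hab', -, -⟩ := hshift (i := a + 1) (by lia) (by lia)
  rw [show b - 1 + (b - a) + 1 = b + (b - a) by lia, show b - 1 + 1 = b by lia] at hbc
  rw [show a + 1 + (b - a) = b + 1 by lia] at hab'
  have hmid (i : ℕ) (hi : a < i) (hib : i < b) :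
      (L.map label)[i]? = (L.map label)[i + (b - a)]? := by
    obtain ⟨_, -, -, hword⟩ := hshift hi hib
    simp only [List.getElem?_map, List.getElem?_eq_getElem, Option.map_some, *,
      h.eq_of_take_eq _ _ (congrArg (List.take m) hword), hib.trans hb]
  rcases h.label_eq_or_label_eq hsq (by lia) hb has hqb hbq hab' hbc with hl | ⟨hc, hl⟩
  · refine sqFree_iff_forall_not_squareAt.mp hlabel a (b - a)
      ⟨by lia, by rw [List.length_map]; lia, fun i hi hi' ↦ ?_⟩
    rcases hi.eq_or_lt with rfl | hi
    · simp [show a + (b - a) = b by lia, hl, hb, show a < L.length by lia]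
    · exact hmid i hi (by lia)
  · refine sqFree_iff_forall_not_squareAt.mp hlabel (a + 1) (b - a)
      ⟨by lia, by rw [List.length_map]; lia, fun i hi hi' ↦ ?_⟩
    rcases (show i ≤ b by lia).eq_or_lt with rfl | hib
    · simp [hl, hb, hc]
    · exact hmid i hi hib

end LabelReadable

theorem SqFree.flatMap {label : β → ι} {m : ℕ} (hw : Synchronizing adj word)
    (hlab : LabelReadable word label m)
    (hshort : ∀ M : List β, M.IsChain adj → M.length ≤ 3 → SqFree (M.flatMap word))
    (hL : L.IsChain adj) (hlabel : SqFree (L.map label)) : SqFree (L.flatMap word) := by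
  rw [sqFree_iff_forall_not_squareAt]
  intro s q hsq
  have hq := hsq.1
  have hsqL := hsq.2.1
  obtain ⟨a, -, hsa, has⟩ := exists_blockPos_le_lt (word := word) (L := L) (k := s) (by lia)
  obtain ⟨b, hb, hqb, hbq⟩ := exists_blockPos_le_lt (word := word) (L := L) (k := s + q) (by lia)
  rcases le_or_gt b (a + 1) with hab | hab
  · have hend := hw.le_blockPos_add_two hL hsq hsa hbq hab
    have hbL := blockPos_mono (word := word) (L := L) (show b + 2 ≤ a + 3 by lia)
    obtain ⟨o, rfl⟩ := Nat.exists_eq_add_of_le hsa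
    refine sqFree_iff_forall_not_squareAt.mp (hshort ((L.drop a).take 3) ?_ (by simp)) o q
      (hsq.of_occursAt (occursAt_blockPos a 3) ?_)
    · exact (hL.drop a).take 3
    · rw [blockPos_add a 3] at hbL
      lia
  · exact hlab.not_squareAt hw hL hlabel hab hb hsa has hqb hbq hsq

end Substitution

/-! ### Checking square-freeness by computation -/

section Computation

variable {α : Type*} [DecidableEq α] {u v w : List α} {f k n q r s : ℕ}

/-- Decides whether two words have length at least `q` and agree in their first `q` letters. The
kernel evaluates the recursors several times faster than the encoding of a structural recursion. -/
def agree (q : ℕ) : List α → List α → Bool :=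
  Nat.rec (fun _ _ ↦ true) (fun _ ih u v ↦ List.rec false (fun x u' _ ↦
    List.rec false (fun y v' _ ↦ decide (x = y) && ih u' v') v) u) q

theorem agree_of_getElem? (hu : q ≤ u.length) (h : ∀ i < q, u[i]? = v[i]?) :
    agree q u v = true := by
  induction q generalizing u v with
  | zero => rfl
  | succ q ih =>
    match u, v with
    | [], _ => simp at hu
    | x :: u, [] => simpa using h 0
    | x :: u, y :: v =>
      obtain rfl : x = y := by simpa using h 0 q.succ_pos
      exact Bool.and_eq_true_iff.mpr ⟨decide_eq_true rfl,
        ih (by simpa using hu) fun i hi ↦ by simpa using h (i + 1) (by lia)⟩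

/-- For `v = w.drop q`, decides whether no prefix of `w` is a square with a period in
`{q, …, q + f - 1}`. -/
def noPrefixSquare (w : List α) : ℕ → ℕ → List α → Bool
  | 0, _, _ => true
  | _, _, [] => true
  | f + 1, q, y :: v => !agree q w (y :: v) && noPrefixSquare w f (q + 1) v

theorem not_squareAt_of_noPrefixSquare (h : noPrefixSquare w f q (w.drop q) = true) (hq : q ≤ r)
    (hr : r < q + f) : ¬ SquareAt w 0 r := by
  intro hsq
  have hr₀ := hsq.1
  have hrw := hsq.2.1
  induction f generalizing q with
  | zero => lia
  | succ f ih =>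
    rw [List.drop_eq_getElem_cons (by lia), noPrefixSquare, Bool.and_eq_true_iff,
      ← List.drop_eq_getElem_cons] at h
    rcases hq.eq_or_lt with rfl | hq
    · rw [agree_of_getElem? (by lia) fun i hi ↦ ?_] at h
      · simp at h
      · rw [List.getElem?_drop, add_comm]
        exact hsq.2.2 i i.zero_le (by lia)
    · exact ih h.2 hq (by lia)

/-- Decides whether each square in `w` which starts at one of the first `n` positions ends at
position at most `k`. -/
def noCrossingSquare : ℕ → ℕ → List α → Bool
  | 0, _, _ => true
  | _, _, [] => true
  | n + 1, k, x :: w =>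
      noPrefixSquare (x :: w) ((w.length + 1) / 2 - k / 2) (k / 2 + 1) (w.drop (k / 2)) &&
        noCrossingSquare n (k - 1) w

theorem not_squareAt_of_noCrossingSquare (h : noCrossingSquare n k w = true) (hs : s < n)
    (hk : k < s + 2 * q) : ¬ SquareAt w s q := by
  induction n generalizing k s w with
  | zero => lia
  | succ n ih =>
    rintro ⟨hq, hw, hsq⟩
    match w with
    | [] => simp only [List.length_nil] at hw; lia
    | x :: w =>
      rw [noCrossingSquare, Bool.and_eq_true_iff] at h
      rw [List.length_cons] at hw
      match s with
      | 0 => exact not_squareAt_of_noPrefixSquare h.1 (by lia) (by lia) ⟨hq, hw, hsq⟩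
      | s + 1 =>
        refine ih (s := s) h.2 (by lia) (by lia) ⟨hq, by lia, fun i hi hi' ↦ ?_⟩
        simpa [add_right_comm] using hsq (i + 1) (by lia) (by lia)

theorem SqFree.of_noCrossingSquare (h : noCrossingSquare w.length 0 w = true) : SqFree w := by
  rw [sqFree_iff_forall_not_squareAt]
  intro s q hsq
  have hq := hsq.1
  have hw := hsq.2.1
  exact not_squareAt_of_noCrossingSquare h (by lia) (by lia) hsq

theorem SqFree.append_append (huv : SqFree (u ++ v)) (hvw : SqFree (v ++ w))
    (h : noCrossingSquare u.length (u ++ v).length (u ++ v ++ w) = true) :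
    SqFree (u ++ v ++ w) := by
  rw [sqFree_iff_forall_not_squareAt] at huv hvw ⊢
  intro s q hsq
  rcases lt_or_ge s u.length with hs | hs
  · refine huv s q (SquareAt.of_occursAt (j := 0) (by rwa [zero_add]) ?_ ?_)
    · exact List.prefix_append _ _
    · exact le_of_not_gt fun hk ↦ not_squareAt_of_noCrossingSquare h hs hk hsq
  · obtain ⟨s, rfl⟩ := Nat.exists_eq_add_of_le hs
    refine hvw s q (hsq.of_occursAt ?_ ?_)
    · simpa using occursAt_length u (v ++ w) []
    · have := hsq.2.1
      simp only [List.length_append] at this ⊢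
      lia

end Computation

/-! ### Framed images of the substitution -/

/-- The two values of the substitution `himg` at each letter. -/
def himgWord : Fin 3 → Bool → List (Fin 3)
  | 0, false => [0,1,2,1,0,2,1,2,0,2,1,0,2,0,1,0,2,1,2,0,1,2,1,0]
  | 0, true => [0,1,2,1,0,2,1,2,0,2,1,0,2,0,1,2,0,2,1,2,0,1,2,1,0]
  | 1, false => [1,2,0,2,1,0,2,0,1,0,2,1,0,1,2,1,0,2,0,1,2,0,2,1]
  | 1, true => [1,2,0,2,1,0,2,0,1,0,2,1,0,1,2,0,1,0,2,0,1,2,0,2,1]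
  | 2, false => [2,0,1,0,2,1,0,1,2,1,0,2,1,2,0,2,1,0,1,2,0,1,0,2]
  | 2, true => [2,0,1,0,2,1,0,1,2,1,0,2,1,2,0,1,2,1,0,1,2,0,1,0,2]

/-- A word which can be put between `pal` and an image of the letter `c` under `himg` without
creating a square. -/
def frame (c : Fin 3) : List (Fin 3) :=
  if c = 2 then [0,1,2,0,2,1,0] else [0,1,2,0,1,0,2]

/-- The image of the letters of `p :: l` under `himg` chosen by the Booleans, with a `frame` at
both ends. -/
def framedImage (p : Fin 3 × Bool) (l : List (Fin 3 × Bool)) : List (Fin 3) :=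
  frame p.1 ++ (p :: l).flatMap (fun r ↦ himgWord r.1 r.2) ++
    (frame ((p :: l).getLast (List.cons_ne_nil p l)).1).reverse

/-- The blocks of a word `pal ++ v ++ pal`, where `v` is an image under `himg` with a `frame` at
both ends. -/
inductive Block
  | left (c : Fin 3)
  | inner (c : Fin 3) (b : Bool)
  | right (c : Fin 3)
  deriving DecidableEq, Fintype

namespace Block

variable {L : List Block} {x y z : Block} {p : Fin 3 × Bool} {l : List (Fin 3 × Bool)}
  {u : List (Fin 3)} {j k : ℕ}

/-- The word represented by a block. -/
def word : Block → List (Fin 3)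
  | left c => pal ++ frame c
  | inner c b => himgWord c b
  | right c => (frame c).reverse ++ pal

/-- The letter of which a block is an image; the two outer blocks get labels of their own. -/
def label : Block → Fin 3 ⊕ Bool
  | left _ => .inr false
  | inner c _ => .inl c
  | right _ => .inr true

/-- The second block may follow the first one. -/
def Adj : Block → Block → Prop
  | left c, inner d _ => c = d
  | inner c _, inner d _ => c ≠ d
  | inner c _, right d => c = d
  | _, _ => False

instance : DecidableRel Adj := fun x y ↦ by
  cases x <;> cases y <;> unfold Adj <;> infer_instance

theorem le_length_word : ∀ x : Block, 24 ≤ x.word.length := by decide +kernel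

theorem synchronizing_word : Synchronizing Adj word where
  ne_nil x := List.length_pos_iff.mp (lt_of_lt_of_le (by simp) x.le_length_word)
  eq_of_isInfix := by decide +kernel
  eq_zero_of_occursAt := by unfold OccursAt; decide +kernel

theorem labelReadable_label : LabelReadable word label 12 where
  two_mul_le_length := le_length_word
  eq_of_take_eq := by decide +kernel
  eq_of_rtake_eq := by decide +kernel

theorem le_length_flatMap_word (L : List Block) :
    24 * L.length ≤ (L.flatMap word).length := by
  induction L with
  | nil => simp
  | cons x L ih =>
    have := x.le_length_word
    rw [List.flatMap_cons, List.length_append, List.length_cons]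
    lia

theorem sqFree_word (x : Block) : SqFree x.word := by
  have : ∀ x : Block, noCrossingSquare x.word.length 0 x.word = true := by decide +kernel
  exact .of_noCrossingSquare (this x)

theorem Adj.sqFree (h : x.Adj y) : SqFree (x.word ++ y.word) := by
  have : ∀ x y : Block, x.Adj y →
      noCrossingSquare x.word.length x.word.length (x.word ++ y.word) = true := by decide +kernel
  have h₀ : SqFree ([] ++ y.word) := y.sqFree_word
  simpa using (SqFree.append_append (v := []) (by simpa using x.sqFree_word) h₀
    (by simpa using this x y h))

theorem Adj.sqFree_append (hxy : x.Adj y) (hyz : y.Adj z) :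
    SqFree (x.word ++ y.word ++ z.word) := by
  have : ∀ x y z : Block, x.Adj y → y.Adj z → noCrossingSquare x.word.length
      (x.word ++ y.word).length (x.word ++ y.word ++ z.word) = true := by decide +kernel
  exact hxy.sqFree.append_append hyz.sqFree (this x y z hxy hyz)

theorem sqFree_flatMap_word (hL : L.IsChain Adj) (hlabel : SqFree (L.map label)) :
    SqFree (L.flatMap word) := by
  refine SqFree.flatMap synchronizing_word labelReadable_label (fun M hM hlen ↦ ?_) hL hlabel
  match M with
  | [] => exact sqFree_nil
  | [x] => simpa using x.sqFree_word
  | [x, y] => simpa using (List.isChain_pair.mp hM).sqFree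
  | [x, y, z] =>
    simp only [List.isChain_cons_cons, List.isChain_singleton, and_true] at hM
    simpa using hM.1.sqFree_append hM.2
  | _ :: _ :: _ :: _ :: _ => simp only [List.length_cons] at hlen; lia

/-- The blocks which represent an image of the letters of `p :: l`, where the Booleans choose
between the two values of `himg`, followed by the corresponding outer block on the right. -/
def row (p : Fin 3 × Bool) : List (Fin 3 × Bool) → List Block
  | [] => [inner p.1 p.2, right p.1]
  | r :: l => inner p.1 p.2 :: row r l

theorem exists_row_eq_cons (p : Fin 3 × Bool) (l : List (Fin 3 × Bool)) :
    ∃ L, row p l = inner p.1 p.2 :: L := by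
  cases l <;> exact ⟨_, rfl⟩

theorem isChain_cons_row (hx : x.Adj (inner p.1 p.2))
    (hl : ((p :: l).map Prod.fst).IsChain (· ≠ ·)) : (x :: row p l).IsChain Adj := by
  induction l generalizing x p with
  | nil => simpa [row, Adj] using hx
  | cons r l ih =>
    rw [List.map_cons, List.map_cons, List.isChain_cons_cons] at hl
    exact .cons_cons hx (ih hl.1 hl.2)

theorem map_label_row :
    (row p l).map label = ((p :: l).map Prod.fst).map .inl ++ [.inr true] := by
  induction l generalizing p with
  | nil => rfl
  | cons r l ih => rw [row, List.map_cons, ih]; rfl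

theorem flatMap_word_row : (row p l).flatMap word = (p :: l).flatMap (fun r ↦ himgWord r.1 r.2) ++
    (frame ((p :: l).getLast (List.cons_ne_nil p l)).1).reverse ++ pal := by
  induction l generalizing p with
  | nil => simp [row, word]
  | cons r l ih => simp [row, ih, word]

theorem flatMap_word_cons_row :
    (left p.1 :: row p l).flatMap word = pal ++ framedImage p l ++ pal := by
  simp [flatMap_word_row, framedImage, word]

theorem occursAt_cons_row (hu : u.length ≤ 24) (h : OccursAt u ((x :: row p l).flatMap word) j) :
    j < x.word.length ∧ OccursAt u (x.word ++ (inner p.1 p.2).word) j ∨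
      ∃ i, j = x.word.length + i ∧ OccursAt u ((row p l).flatMap word) i := by
  rw [List.flatMap_cons] at h
  rcases lt_or_ge j x.word.length with hj | hj
  · obtain ⟨L, hL⟩ := exists_row_eq_cons p l
    rw [hL, List.flatMap_cons, ← List.append_assoc] at h
    refine .inl ⟨hj, h.of_append_right ?_⟩
    have := (inner p.1 p.2).le_length_word
    rw [List.length_append]
    lia
  · obtain ⟨i, rfl⟩ := Nat.exists_eq_add_of_le hj
    exact .inr ⟨i, rfl, occursAt_append_length_add.mp h⟩

theorem occursAt_row (hu : u.length ≤ 24) (hinner : ∀ c b d b', c ≠ d →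
      ∀ j < (inner c b).word.length, ¬ OccursAt u ((inner c b).word ++ (inner d b').word) j)
    (hright : ∀ c b, ∀ j < ((inner c b).word ++ (right c).word).length,
      OccursAt u ((inner c b).word ++ (right c).word) j →
        j + k = ((inner c b).word ++ (right c).word).length)
    (hl : ((p :: l).map Prod.fst).IsChain (· ≠ ·)) (hu₀ : u ≠ [])
    (h : OccursAt u ((row p l).flatMap word) j) :
    j + k = ((row p l).flatMap word).length := by
  induction l generalizing p j with
  | nil =>
    rw [row, List.flatMap_cons, List.flatMap_singleton] at *
    have := h.add_length_le hu₀
    have := List.length_pos_iff.mpr hu₀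
    exact hright _ _ _ (by lia) h
  | cons r l ih =>
    rw [List.map_cons, List.map_cons, List.isChain_cons_cons] at hl
    rcases occursAt_cons_row hu h with ⟨hj, hj'⟩ | ⟨i, rfl, hi⟩
    · exact absurd hj' (hinner _ _ _ _ hl.1 _ hj)
    · rw [row, List.flatMap_cons, List.length_append, ← ih hl.2 hi, add_assoc]

theorem occursAt_phat_row (hl : ((p :: l).map Prod.fst).IsChain (· ≠ ·))
    (h : OccursAt phat ((row p l).flatMap word) j) :
    j + 19 = ((row p l).flatMap word).length :=
  occursAt_row (by decide) (by unfold OccursAt; decide +kernel)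
    (by unfold OccursAt; decide +kernel) hl (by decide) h

theorem occursAt_reverse_phat_row (hl : ((p :: l).map Prod.fst).IsChain (· ≠ ·))
    (h : OccursAt phat.reverse ((row p l).flatMap word) j) :
    j + 39 = ((row p l).flatMap word).length :=
  occursAt_row (by decide) (by unfold OccursAt; decide +kernel)
    (by unfold OccursAt; decide +kernel) hl (by decide) h

theorem eq_of_occursAt_phat_left : ∀ c b, ∀ j < (left c).word.length,
    OccursAt phat ((left c).word ++ (inner c b).word) j → j = 20 := by
  unfold OccursAt
  decide +kernel

theorem eq_of_occursAt_reverse_phat_left : ∀ c b, ∀ j < (left c).word.length,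
    OccursAt phat.reverse ((left c).word ++ (inner c b).word) j → j = 0 := by
  unfold OccursAt
  decide +kernel

end Block

theorem sqFree_framedImage {p : Fin 3 × Bool} {l : List (Fin 3 × Bool)}
    (h : SqFree ((p :: l).map Prod.fst)) : SqFree (pal ++ framedImage p l ++ pal) := by
  rw [← Block.flatMap_word_cons_row]
  refine Block.sqFree_flatMap_word (Block.isChain_cons_row rfl h.isChain_ne) ?_
  rw [List.map_cons, Block.map_label_row]
  exact ((h.map Sum.inl_injective).append_singleton (by simp)).cons (by simp [Block.label])

/-! ### Nice words -/

section Nice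

variable {u v w : List (Fin 3)} {a b j : ℕ}

theorem occCount_eq_card (u w : List (Fin 3)) :
    occCount u w = {j ∈ Finset.range w.length | (w.drop j).take u.length = u}.card := by
  rw [occCount, List.countP_eq_length_filter,
    ← List.toFinset_card_of_nodup (List.nodup_range.filter _)]
  congr 1
  ext j
  simp

theorem occCount_eq_two_iff (hu : u ≠ []) (ha : OccursAt u w a) (hb : OccursAt u w b)
    (hab : a ≠ b) : occCount u w = 2 ↔ ∀ j, OccursAt u w j → j = a ∨ j = b := by
  have mem (j : ℕ) : j ∈ {j ∈ Finset.range w.length | (w.drop j).take u.length = u} ↔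
      OccursAt u w j := by
    rw [Finset.mem_filter, Finset.mem_range, OccursAt, List.prefix_iff_eq_take, eq_comm (a := u)]
    refine and_iff_right_of_imp fun h ↦ ?_
    by_contra! hj
    rw [List.drop_of_length_le hj, List.take_nil] at h
    exact hu h.symm
  rw [occCount_eq_card]
  constructor
  · intro h j hj
    have hsub : {a, b} ⊆ {j ∈ Finset.range w.length | (w.drop j).take u.length = u} := by
      simp only [Finset.insert_subset_iff, Finset.singleton_subset_iff, mem, ha, hb, and_self]
    rw [← mem, ← Finset.eq_of_subset_of_card_le hsub (by rw [h, Finset.card_pair hab])] at hj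
    simpa using hj
  · intro h
    rw [← Finset.card_pair hab]
    congr 1
    ext j
    rw [mem, Finset.mem_insert, Finset.mem_singleton]
    exact ⟨h j, by rintro (rfl | rfl) <;> assumption⟩

theorem length_pal : pal.length = 39 := by decide

theorem reverse_pal : pal.reverse = pal := by decide

theorem occursAt_phat_pal : OccursAt phat pal 20 := by unfold OccursAt; decide

theorem occursAt_reverse_phat_pal : OccursAt phat.reverse pal 0 := by unfold OccursAt; decide

theorem occursAt_pal_append (v : List (Fin 3)) :
    OccursAt pal (pal ++ v ++ pal) (v.length + 39) := by
  simpa [length_pal, add_comm] using occursAt_length (pal ++ v) pal []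

theorem isNice_iff : IsNice v ↔ SqFree (pal ++ v ++ pal) ∧
    (∀ j, OccursAt phat (pal ++ v ++ pal) j → j = 20 ∨ j = v.length + 59) ∧
    ∀ j, OccursAt phat.reverse (pal ++ v ++ pal) j → j = 0 ∨ j = v.length + 39 := by
  have hpal : OccursAt pal (pal ++ v ++ pal) 0 := by simp [OccursAt]
  rw [IsNice, occCount_eq_two_iff (a := 20) (b := v.length + 59) (by decide) ?_ ?_ (by lia),
    occCount_eq_two_iff (a := 0) (b := v.length + 39) (by decide) ?_ ?_ (by lia)]
  · exact occursAt_reverse_phat_pal.trans hpal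
  · exact occursAt_reverse_phat_pal.trans (occursAt_pal_append v)
  · exact occursAt_phat_pal.trans hpal
  · exact occursAt_phat_pal.trans (occursAt_pal_append v)

theorem IsNice.reverse (h : IsNice v) : IsNice v.reverse := by
  have hv : pal ++ v.reverse ++ pal = (pal ++ v ++ pal).reverse := by simp [reverse_pal]
  have hlen : (pal ++ v ++ pal).length = v.length + 78 := by
    simp only [List.length_append, length_pal]
    lia
  have hflip {u : List (Fin 3)} {j : ℕ} (hu : u.length = 19)
      (hj : OccursAt u (pal ++ v ++ pal).reverse j) :
      ∃ i, j + i = v.length + 59 ∧ OccursAt u.reverse (pal ++ v ++ pal) i := by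
    have hle := hj.add_length_le (List.length_pos_iff.mp (by lia))
    rw [List.length_reverse] at hle
    refine ⟨v.length + 59 - j, by lia, ?_⟩
    simpa using hj.reverse (i := v.length + 59 - j) (by rw [List.length_reverse]; lia)
  rw [isNice_iff, hv, List.length_reverse] at *
  refine ⟨h.1.reverse, fun j hj ↦ ?_, fun j hj ↦ ?_⟩
  · obtain ⟨i, hij, hi⟩ := hflip rfl hj
    have := h.2.2 i hi
    lia
  · obtain ⟨i, hij, hi⟩ := hflip rfl hj
    have := h.2.1 i (by rwa [List.reverse_reverse] at hi)
    lia

variable {p : Fin 3 × Bool} {l : List (Fin 3 × Bool)}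

theorem isNice_framedImage (h : SqFree ((p :: l).map Prod.fst)) : IsNice (framedImage p l) := by
  rw [isNice_iff]
  refine ⟨sqFree_framedImage h, ?_⟩
  have hlen := congrArg List.length (Block.flatMap_word_cons_row (p := p) (l := l))
  rw [List.flatMap_cons, List.length_append, List.length_append, List.length_append,
    length_pal] at hlen
  rw [← Block.flatMap_word_cons_row]
  refine ⟨fun j hj ↦ ?_, fun j hj ↦ ?_⟩ <;>
    rcases Block.occursAt_cons_row (by decide) hj with ⟨hj, h'⟩ | ⟨i, rfl, hi⟩
  · exact .inl (Block.eq_of_occursAt_phat_left p.1 p.2 j hj h')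
  · have := Block.occursAt_phat_row h.isChain_ne hi
    lia
  · exact .inl (Block.eq_of_occursAt_reverse_phat_left p.1 p.2 j hj h')
  · have := Block.occursAt_reverse_phat_row h.isChain_ne hi
    lia

end Nice

/-! ### Many nice words -/

theorem exists_sqFree_length (N : ℕ) : ∃ w : List (Fin 3), w.length = N ∧ SqFree w := by
  induction N with
  | zero => exact ⟨[], rfl, sqFree_nil⟩
  | succ N ih =>
    obtain ⟨w, rfl, hw⟩ := ih
    rcases eq_or_ne w [] with rfl | hne
    · exact ⟨[0], rfl, sqFree_nil.cons (by simp)⟩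
    have himage : SqFree ((w.map (Block.inner · false)).flatMap Block.word) := by
      refine Block.sqFree_flatMap_word (List.isChain_map _ |>.mpr hw.isChain_ne) ?_
      rw [List.map_map]
      exact hw.map Sum.inl_injective
    have hlen := Block.le_length_flatMap_word (w.map (Block.inner · false))
    rw [List.length_map] at hlen
    refine ⟨_, List.length_take_of_le ?_,
      himage.of_isInfix (List.take_prefix (w.length + 1) _).isInfix⟩
    have := List.length_pos_iff.mpr hne
    lia

section Counting

variable {p p' : Fin 3 × Bool} {l l' : List (Fin 3 × Bool)}

theorem length_himgWord : ∀ c b, (himgWord c b).length = 24 + b.toNat := by decide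

theorem length_frame : ∀ c, (frame c).length = 7 := by decide

theorem eq_of_himgWord_isPrefix : ∀ c b b', himgWord c b <+: himgWord c b' → b = b' := by decide

theorem length_framedImage :
    (framedImage p l).length = 14 + ((p :: l).map fun r ↦ 24 + r.2.toNat).sum := by
  simp only [framedImage, List.length_append, List.length_reverse, List.length_flatMap,
    length_frame, length_himgWord]
  lia

theorem eq_of_flatMap_himgWord_eq (hfst : l.map Prod.fst = l'.map Prod.fst)
    (h : l.flatMap (fun r ↦ himgWord r.1 r.2) = l'.flatMap (fun r ↦ himgWord r.1 r.2)) :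
    l = l' := by
  induction l generalizing l' with
  | nil => exact (List.map_eq_nil_iff.mp hfst.symm).symm
  | cons r l ih =>
    obtain ⟨r', l', rfl⟩ := List.exists_cons_of_ne_nil (l := l') (by rintro rfl; simp at hfst)
    obtain ⟨c, b⟩ := r
    obtain ⟨c', b'⟩ := r'
    obtain ⟨hc, hfst'⟩ := List.cons.inj hfst
    obtain rfl : c = c' := hc
    obtain rfl : b = b' := by
      have hb := List.prefix_append (himgWord c b) (l.flatMap fun r ↦ himgWord r.1 r.2)
      have hb' := List.prefix_append (himgWord c b') (l'.flatMap fun r ↦ himgWord r.1 r.2)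
      rw [List.flatMap_cons, List.flatMap_cons] at h
      rcases List.prefix_or_prefix_of_prefix (h ▸ hb) hb' with hpre | hpre
      · exact eq_of_himgWord_isPrefix _ _ _ hpre
      · exact (eq_of_himgWord_isPrefix _ _ _ hpre).symm
    rw [List.flatMap_cons, List.flatMap_cons, List.append_right_inj] at h
    rw [ih hfst' h]

theorem cons_eq_cons_of_framedImage_eq (hfst : (p :: l).map Prod.fst = (p' :: l').map Prod.fst)
    (h : framedImage p l = framedImage p' l') : p :: l = p' :: l' := by
  have hp : p.1 = p'.1 := (List.cons.inj hfst).1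
  refine eq_of_flatMap_himgWord_eq hfst (List.append_cancel_left (as := frame p.1) ?_)
  nth_rw 2 [hp]
  exact List.append_inj_left' h (by simp only [List.length_reverse, length_frame])

theorem exists_isNice_card_eq_choose (N k : ℕ) : ∃ T : Finset (List (Fin 3)),
    T.card = (N + 1).choose k ∧ ∀ w ∈ T, IsNice w ∧ w.length = 24 * (N + 1) + k + 14 := by
  obtain ⟨v, hv, hvsq⟩ := exists_sqFree_length (N + 1)
  let f (s : Finset (Fin (N + 1))) (i : Fin (N + 1)) : Fin 3 × Bool := (v[i], decide (i ∈ s))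
  let image (s : Finset (Fin (N + 1))) := framedImage (f s 0) (List.ofFn fun i ↦ f s i.succ)
  have hfst (s) : (f s 0 :: List.ofFn fun i ↦ f s i.succ).map Prod.fst = v := by
    rw [← List.ofFn_succ, List.map_ofFn]
    exact List.ext_getElem (by simp [hv]) fun i h₁ h₂ ↦ by
      simp only [f, List.getElem_ofFn, Function.comp_apply, Fin.getElem_fin]
  have hinj : image.Injective := by
    intro s t hst
    have := cons_eq_cons_of_framedImage_eq ((hfst s).trans (hfst t).symm) hst
    rw [← List.ofFn_succ, ← List.ofFn_succ, List.ofFn_inj] at this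
    ext i
    simpa [f] using congrFun this i
  refine ⟨(Finset.univ.powersetCard k).map ⟨image, hinj⟩, ?_, ?_⟩
  · rw [Finset.card_map, Finset.card_powersetCard, Finset.card_fin]
  · intro w hw
    obtain ⟨s, hs, rfl⟩ := Finset.mem_map.mp hw
    refine ⟨isNice_framedImage (by rwa [hfst]), ?_⟩
    have hsum : ∑ i, (decide (i ∈ s)).toNat = k := by
      simp [← (Finset.mem_powersetCard.mp hs).2, Bool.toNat, Bool.cond_decide]
    rw [Function.Embedding.coeFn_mk, length_framedImage, ← List.ofFn_succ, List.map_ofFn,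
      List.sum_ofFn]
    simp only [Function.comp_apply, Finset.sum_add_distrib, f, hsum, Finset.sum_const,
      Finset.card_univ, Fintype.card_fin, smul_eq_mul]
    lia

theorem two_pow_le_centralBinom (m : ℕ) : 2 ^ m ≤ m.centralBinom := by
  induction m with
  | zero => simp
  | succ m ih =>
    have := m.succ_mul_centralBinom_succ
    rw [pow_succ]
    nlinarith

theorem two_pow_le_choose {m r k : ℕ} (h : r ≤ k) : 2 ^ m ≤ (k + 2 * m).choose (r + m) :=
  calc 2 ^ m ≤ (2 * m).choose m := two_pow_le_centralBinom m
    _ ≤ (r + m + m).choose m := Nat.choose_le_choose m (by lia)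
    _ = (r + m + m).choose (r + m) := (Nat.choose_symm_add).symm
    _ ≤ (k + 2 * m).choose (r + m) := Nat.choose_le_choose _ (by lia)

/- The length `n` is reached with `k + 1 + 2 m` letters, of which `r + m` have images of length 25.
Replacing `m` by `m + 1` uses two more letters and one more long image, hence the `49 = 2 * 24 + 1`;
the offset `566 = 14 + 23 * 24` ensures `r ≤ k + 1` for every remainder `r` modulo 24. -/
theorem exists_isNice_two_pow_le_card {n : ℕ} (hn : 566 ≤ n) : ∃ T : Finset (List (Fin 3)),
    2 ^ ((n - 566) / 49) ≤ T.card ∧ ∀ w ∈ T, IsNice w ∧ w.length = n := by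
  obtain ⟨m, hm⟩ : ∃ m, m = (n - 566) / 49 := ⟨_, rfl⟩
  obtain ⟨k, hk⟩ : ∃ k, k + 1 = (n - 14 - 49 * m) / 24 := ⟨(n - 14 - 49 * m) / 24 - 1, by lia⟩
  obtain ⟨r, hr⟩ : ∃ r, r = (n - 14 - 49 * m) % 24 := ⟨_, rfl⟩
  obtain ⟨T, hcard, hT⟩ := exists_isNice_card_eq_choose (k + 2 * m) (r + m)
  refine ⟨T, ?_, fun w hw ↦ ⟨(hT w hw).1, (hT w hw).2.trans (by lia)⟩⟩
  rw [hcard, ← hm, add_right_comm]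
  exact two_pow_le_choose (by lia)

end Counting

/-! ### Gluing nice words -/

section Gluing

variable {u v l x z W : List (Fin 3)} {j k n q s : ℕ}

/-- The word `p u p v p l`, in which the words `u`, `v` and `l` are separated by `p = pal`. -/
def glue (u v l : List (Fin 3)) : List (Fin 3) := pal ++ u ++ pal ++ v ++ pal ++ l

theorem occursAt_glue_left (u v l : List (Fin 3)) : OccursAt (pal ++ u ++ pal) (glue u v l) 0 := by
  simp [OccursAt, glue]

theorem occursAt_glue_middle (u v l : List (Fin 3)) :
    OccursAt (pal ++ v ++ pal) (glue u v l) (u.length + 39) := by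
  simpa [glue, length_pal, add_comm] using occursAt_length (pal ++ u) (pal ++ v ++ pal) l

theorem occursAt_glue_right (u v l : List (Fin 3)) :
    OccursAt (pal ++ l) (glue u v l) (u.length + v.length + 78) := by
  convert occursAt_length (pal ++ u ++ pal ++ v) (pal ++ l) [] using 1
  · simp [glue]
  · simp only [List.length_append, length_pal]
    lia

theorem occursAt_glue (hz : z.length ≤ 39) (h : OccursAt z (glue u v l) j) :
    OccursAt z (pal ++ u ++ pal) j ∨
    (∃ i, j = u.length + 39 + i ∧ OccursAt z (pal ++ v ++ pal) i) ∨
    ∃ i, j = u.length + v.length + 78 + i ∧ OccursAt z (pal ++ l) i := by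
  rcases occursAt_append_append hz h with h' | ⟨i, hi, h'⟩
  · rw [List.append_assoc _ v pal] at h'
    rcases occursAt_append_append (x := pal ++ u) hz h' with h' | ⟨i, hi, h'⟩
    · exact .inl h'
    · rw [List.length_append, length_pal] at hi
      exact .inr (.inl ⟨i, by lia, by rwa [List.append_assoc]⟩)
  · simp only [List.length_append, length_pal] at hi
    exact .inr (.inr ⟨i, by lia, h'⟩)

theorem SquareAt.occursAt_phat_or (h : SquareAt W s q) (hk : OccursAt pal W k) (hs : s ≤ k)
    (he : k + 39 ≤ s + 2 * q) :
    s + q ≤ k + 20 ∧ OccursAt phat W (k + 20 - q) ∨ OccursAt phat.reverse W (k + q) := by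
  have hphat : phat.length = 19 := rfl
  rcases le_or_gt (s + q) (k + 20) with hq | hq
  · refine .inl ⟨hq, (h.occursAt_add_iff (by lia) (by lia)).mp ?_⟩
    rw [Nat.sub_add_cancel (by lia)]
    exact occursAt_phat_pal.trans hk
  · refine .inr ((h.occursAt_add_iff hs ?_).mpr (occursAt_reverse_phat_pal.trans hk))
    rw [List.length_reverse]
    lia

/-- The word `l` may be the last one in a word `glue u v l`: after `pal`, it creates neither a
square nor a further occurrence of `phat` or of its mirror image. -/
structure IsTail (l : List (Fin 3)) : Prop where
  sqFree : SqFree (pal ++ l)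
  occursAt_phat : ∀ j, OccursAt phat (pal ++ l) j → j = 20
  occursAt_reverse_phat : ∀ j, OccursAt phat.reverse (pal ++ l) j → j = 0

theorem IsNice.isTail_of_isPrefix (hx : IsNice x) (hl : l <+: x) : IsTail l := by
  have hpre : pal ++ l <+: pal ++ x ++ pal := by
    rw [List.append_assoc]
    exact (List.prefix_append_right_inj pal).mpr (hl.trans (List.prefix_append x pal))
  have hle := hl.length_le
  have hocc {z : List (Fin 3)} {j : ℕ} (hz : z.length = 19) (h : OccursAt z (pal ++ l) j) :
      j + 19 ≤ l.length + 39 ∧ OccursAt z (pal ++ x ++ pal) j := by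
    have := h.add_length_le (List.length_pos_iff.mp (by lia))
    rw [List.length_append, length_pal] at this
    exact ⟨by lia, by simpa using h.trans (w := pal ++ x ++ pal) (j := 0) hpre⟩
  rw [isNice_iff] at hx
  refine ⟨hx.1.of_isInfix hpre.isInfix, fun j hj ↦ ?_, fun j hj ↦ ?_⟩
  · obtain ⟨hj, h⟩ := hocc rfl hj
    have := hx.2.1 j h
    lia
  · obtain ⟨hj, h⟩ := hocc rfl hj
    have := hx.2.2 j h
    lia

theorem occursAt_phat_glue (hu : IsNice u) (hv : IsNice v) (hl : IsTail l)
    (h : OccursAt phat (glue u v l) j) :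
    j = 20 ∨ j = u.length + 59 ∨ j = u.length + v.length + 98 := by
  rw [isNice_iff] at hu hv
  rcases occursAt_glue (by decide) h with h | ⟨i, rfl, h'⟩ | ⟨i, rfl, h'⟩
  · have := hu.2.1 j h
    lia
  · have := hv.2.1 i h'
    lia
  · have := hl.occursAt_phat i h'
    lia

theorem occursAt_reverse_phat_glue (hu : IsNice u) (hv : IsNice v) (hl : IsTail l)
    (h : OccursAt phat.reverse (glue u v l) j) :
    j = 0 ∨ j = u.length + 39 ∨ j = u.length + v.length + 78 := by
  rw [isNice_iff] at hu hv
  rcases occursAt_glue (by decide) h with h | ⟨i, rfl, h'⟩ | ⟨i, rfl, h'⟩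
  · have := hu.2.2 j h
    lia
  · have := hv.2.2 i h'
    lia
  · have := hl.occursAt_reverse_phat i h'
    lia

theorem SquareAt.period_eq_of_glue (hu : IsNice u) (hv : IsNice v) (hl : IsTail l)
    (hun : u.length = n) (hvn : v.length = n)
    (h : SquareAt (glue u v l) s q) : q = n + 39 ∧ s ≤ n + 59 := by
  have hphat (j) := occursAt_phat_glue hu hv hl (j := j)
  have hrev (j) := occursAt_reverse_phat_glue hu hv hl (j := j)
  rw [hun, hvn] at hphat hrev
  have hv' : OccursAt (pal ++ v ++ pal) (glue u v l) (n + 39) := hun ▸ occursAt_glue_middle u v l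
  have hl' : OccursAt (pal ++ l) (glue u v l) (n + n + 78) := by
    simpa only [hun, hvn] using occursAt_glue_right u v l
  have hsu := hu.1.lt_of_squareAt (occursAt_glue_left u v l) h (Nat.zero_le s)
  have hsv := hv.1.lt_of_squareAt hv' h
  have hsl := hl.1.lt_of_squareAt hl' h
  have hpal₁ : OccursAt pal (glue u v l) (n + 39) := .trans (i := 0) (by simp [OccursAt]) hv'
  have hpal₂ : OccursAt pal (glue u v l) (n + n + 78) := .trans (i := 0) (by simp [OccursAt]) hl'
  have hlen := h.2.1
  simp only [glue, List.length_append, length_pal, hun, hvn] at hsu hsv hsl hlen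
  have hstep {k : ℕ} (hk : OccursAt pal (glue u v l) k) (hs : s ≤ k) (he : k + 39 ≤ s + 2 * q) :
      s + q ≤ k + 20 ∧ (k = q ∨ k = q + n + 39 ∨ k = q + n + n + 78) ∨
        (k + q = n + 39 ∨ k + q = n + n + 78) := by
    have := h.1
    rcases h.occursAt_phat_or hk hs he with ⟨hq, hocc⟩ | hocc
    · have := hphat _ hocc
      lia
    · have := hrev _ hocc
      lia
  rcases le_or_gt s (n + 39) with hs | hs
  · have := hstep hpal₁ hs (by lia)
    lia
  · have := hstep hpal₂ (by lia) (by lia)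
    lia

theorem exists_eq_take_append_drop_of_squareAt (hu : IsNice u) (hv : IsNice v) (hl : IsTail l)
    (hun : u.length = n) (hvn : v.length = n)
    (h : SquareAt (glue u v l) s q) : ∃ t ≤ n, v = l.take t ++ u.drop t := by
  obtain ⟨rfl, hs⟩ := h.period_eq_of_glue hu hv hl hun hvn
  have hl₀ : s ≤ l.length + 39 := by
    have := h.2.1
    simp only [glue, List.length_append, length_pal] at this
    lia
  have hu' : OccursAt u (glue u v l) 39 :=
    (occursAt_length pal u pal).trans (occursAt_glue_left u v l)
  have hv' : OccursAt v (glue u v l) (39 + (n + 39)) := by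
    have := (occursAt_length pal v pal).trans (occursAt_glue_middle u v l)
    rwa [hun, length_pal, add_comm] at this
  have hl' : OccursAt l (glue u v l) (39 + (n + 39) + (n + 39)) := by
    have := (occursAt_append_length_add (v := pal) (i := 0).mpr List.prefix_rfl).trans
      (occursAt_glue_right u v l)
    rwa [hun, hvn, length_pal, show n + n + 78 + (39 + 0) = 39 + (n + 39) + (n + 39) by lia] at this
  obtain ⟨t, ht⟩ : ∃ t, t = min (s - 39) n := ⟨_, rfl⟩
  have htake : v.take t = l.take t := by
    rcases t.eq_zero_or_pos with rfl | ht₀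
    · rfl
    · have hlt : (v.take t).length = t ∧ (l.take t).length = t := by
        simp only [List.length_take]
        lia
      exact h.eq_of_occursAt (by lia) (by lia) (hv'.take t) (hl'.take t) (by lia)
  have hdrop : u.drop t = v.drop t := by
    rcases le_or_gt n t with htn | htn
    · rw [List.drop_of_length_le (by lia), List.drop_of_length_le (by lia)]
    · refine h.eq_of_occursAt (by lia) ?_ (hu'.drop t) (add_right_comm 39 t _ ▸ hv'.drop t) ?_ <;>
        simp only [List.length_drop] <;> lia
  exact ⟨t, ht ▸ min_le_right _ _, by rw [hdrop, ← htake, List.take_append_drop]⟩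

theorem sqFree_glue (hu : IsNice u) (hv : IsNice v) (hl : IsTail l)
    (hun : u.length = n) (hvn : v.length = n)
    (h : ∀ t ≤ n, v ≠ l.take t ++ u.drop t) : SqFree (glue u v l) := by
  rw [sqFree_iff_forall_not_squareAt]
  intro s q hsq
  obtain ⟨t, ht, hv'⟩ := exists_eq_take_append_drop_of_squareAt hu hv hl hun hvn hsq
  exact h t ht hv'

end Gluing

/-! ### Independent sets -/

section Independent

variable {α : Type*} {out : α → Finset α} {d : ℕ} {T : Finset α}

theorem exists_card_inNeighbors_le [DecidableEq α] (hd : ∀ u ∈ T, (out u).card ≤ d)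
    (hT : T.Nonempty) : ∃ v ∈ T, {u ∈ T | v ∈ out u}.card ≤ d := by
  refine Finset.exists_le_of_sum_le hT ?_
  refine (Finset.sum_card_bipartiteAbove_eq_sum_card_bipartiteBelow (s := T) (t := T)
    fun u v ↦ v ∈ out u).symm.trans_le ?_
  refine Finset.sum_le_sum fun u hu ↦ (Finset.card_le_card fun v hv ↦ ?_).trans (hd u hu)
  exact (Finset.mem_filter.mp hv).2

theorem exists_independent_subset (hd : ∀ u ∈ T, (out u).card ≤ d) :
    ∃ S ⊆ T, (S : Set α).Pairwise (fun u v ↦ v ∉ out u) ∧ T.card ≤ S.card * (2 * d + 1) := by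
  classical
  induction T using Finset.strongInduction with
  | H T ih =>
    rcases T.eq_empty_or_nonempty with rfl | hT
    · exact ⟨∅, by simp⟩
    obtain ⟨v, hv, hvd⟩ := exists_card_inNeighbors_le hd hT
    obtain ⟨N, hN⟩ : ∃ N, N = insert v (out v ∪ {u ∈ T | v ∈ out u}) := ⟨_, rfl⟩
    have hN_card : N.card ≤ 2 * d + 1 := by
      have := hd v hv
      have := Finset.card_union_le (out v) {u ∈ T | v ∈ out u}
      have := Finset.card_insert_le v (out v ∪ {u ∈ T | v ∈ out u})
      rw [hN]
      lia
    have hvN : v ∈ N := hN ▸ Finset.mem_insert_self v _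
    have hmem {u : α} (hu : u ∈ T \ N) : v ∉ out u ∧ u ∉ out v := by
      simp only [hN, Finset.mem_sdiff, Finset.mem_insert, Finset.mem_union,
        Finset.mem_filter] at hu
      tauto
    obtain ⟨S, hST, hS, hcard⟩ := ih (T \ N)
      ((Finset.ssubset_iff_of_subset Finset.sdiff_subset).mpr ⟨v, hv, by simp [hvN]⟩)
      fun u hu ↦ hd u (Finset.sdiff_subset hu)
    have hvS : v ∉ S := fun h ↦ (Finset.mem_sdiff.mp (hST h)).2 hvN
    refine ⟨insert v S, Finset.insert_subset hv (hST.trans Finset.sdiff_subset), ?_, ?_⟩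
    · rw [Finset.coe_insert, Set.pairwise_insert_of_notMem hvS]
      exact ⟨hS, fun u hu ↦ (hmem (hST hu)).symm⟩
    · rw [Finset.card_insert_of_notMem hvS, add_one_mul]
      have := Finset.card_le_card_sdiff_add_card (s := T) (t := N)
      lia

end Independent

/-! ### Conflicts between nice words -/

section Conflicts

variable {n : ℕ} {u v : List (Fin 3)} {S : Set (List (Fin 3))}

theorem lword_eq_nil_or_isNice (i : ℕ) : lword i = [] ∨ IsNice (lword i) := by
  unfold lword
  split_ifs with h
  · exact .inr (Set.IsWF.min_mem _ h).1
  · exact .inl rfl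

theorem mirrorIf_mirrorIf (a : Bool) (w : List (Fin 3)) : mirrorIf a (mirrorIf a w) = w := by
  cases a <;> simp [mirrorIf]

theorem length_mirrorIf (a : Bool) (w : List (Fin 3)) : (mirrorIf a w).length = w.length := by
  cases a <;> simp [mirrorIf]

theorem isNice_mirrorIf (hu : IsNice u) (a : Bool) : IsNice (mirrorIf a u) := by
  cases a
  exacts [hu, hu.reverse]

theorem isTail_mirrorIf_lword (hu : IsNice u) (a : Bool) (i : ℕ) :
    IsTail (mirrorIf a (lword i)) := by
  rcases lword_eq_nil_or_isNice i with h | h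
  · refine hu.isTail_of_isPrefix ?_
    rw [h]
    cases a <;> exact List.nil_prefix
  · exact (isNice_mirrorIf h a).isTail_of_isPrefix List.prefix_rfl

/-- All words of length `n` which may produce a square in one of the words of `GoodSet` together
with `u`, and `u` and its mirror image (`t = 0`). The Booleans `a` and `b` select one of the four
words of `GoodSet`. -/
noncomputable def conflicts (n : ℕ) (u : List (Fin 3)) : Finset (List (Fin 3)) :=
  (Finset.Icc (2 * n + 100) (7 * n) ×ˢ Finset.range (n + 1) ×ˢ Finset.univ ×ˢ Finset.univ).image
    fun (i, t, a, b) ↦ mirrorIf a ((mirrorIf a (lword i)).take t ++ (mirrorIf b u).drop t)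

theorem card_conflicts_le : (conflicts n u).card ≤ 20 * n ^ 2 := by
  refine Finset.card_image_le.trans ?_
  simp only [Finset.card_product, Nat.card_Icc, Finset.card_range, Finset.card_univ,
    Fintype.card_bool]
  rcases le_or_gt n 19 with hn | hn
  · simp [show 7 * n + 1 - (2 * n + 100) = 0 by lia]
  · have : 7 * n + 1 - (2 * n + 100) ≤ 5 * n - 5 := by lia
    calc _ ≤ (5 * n - 5) * ((n + 1) * (2 * 2)) := by gcongr
      _ ≤ 20 * n ^ 2 := by
        obtain ⟨m, rfl⟩ : ∃ m, n = m + 1 := ⟨n - 1, by lia⟩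
        rw [show 5 * (m + 1) - 5 = 5 * m by lia]
        nlinarith

theorem mem_conflicts {i t : ℕ} (hi : 2 * n + 100 ≤ i) (hi' : i ≤ 7 * n) (ht : t ≤ n) (a b : Bool)
    (h : mirrorIf a v = (mirrorIf a (lword i)).take t ++ (mirrorIf b u).drop t) :
    v ∈ conflicts n u := by
  refine Finset.mem_image.mpr ⟨(i, t, a, b), ?_, ?_⟩
  · simp only [Finset.mem_product, Finset.mem_Icc, Finset.mem_range, Finset.mem_univ, and_true]
    lia
  · exact (congrArg (mirrorIf a) h).symm.trans (mirrorIf_mirrorIf a v)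

theorem reverse_mem_conflicts (hn : 20 ≤ n) : u.reverse ∈ conflicts n u :=
  mem_conflicts (i := 7 * n) (t := 0) (by lia) le_rfl (Nat.zero_le n) false true rfl

theorem sqFree_glue_of_notMem_conflicts {i : ℕ} (hi : 2 * n + 100 ≤ i) (hi' : i ≤ 7 * n)
    (hu : IsNice u ∧ u.length = n) (hv : IsNice v ∧ v.length = n) (h : v ∉ conflicts n u)
    (a b : Bool) : SqFree (glue (mirrorIf b u) (mirrorIf a v) (mirrorIf a (lword i))) :=
  sqFree_glue (isNice_mirrorIf hu.1 b) (isNice_mirrorIf hv.1 a) (isTail_mirrorIf_lword hu.1 a i)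
    ((length_mirrorIf b u).trans hu.2) ((length_mirrorIf a v).trans hv.2)
    fun _ ht hEq ↦ h (mem_conflicts hi hi' ht a b hEq)

theorem goodSet_of_pairwise_notMem_conflicts (hn : 20 ≤ n) (hS : ∀ w ∈ S, IsNice w ∧ w.length = n)
    (h : S.Pairwise fun u v ↦ v ∉ conflicts n u) : GoodSet n S := by
  refine ⟨hS, fun w hw hne hw' ↦ h hw hw' hne (reverse_mem_conflicts hn), ?_⟩
  intro i hi hi' u hu v hv huv
  have hsq := sqFree_glue_of_notMem_conflicts hi hi' (hS u hu) (hS v hv) (h hu hv huv)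
  exact ⟨hsq false false, hsq false true, hsq true false, hsq true true⟩

theorem exists_goodSet_two_pow_le (hn : 566 ≤ n) :
    ∃ S, GoodSet n S ∧ 2 ^ ((n - 566) / 49) ≤ S.ncard * (40 * n ^ 2 + 1) := by
  obtain ⟨T, hT, hTn⟩ := exists_isNice_two_pow_le_card hn
  obtain ⟨S, hST, hS, hcard⟩ :=
    exists_independent_subset (T := T) fun u _ ↦ card_conflicts_le (n := n) (u := u)
  refine ⟨S, goodSet_of_pairwise_notMem_conflicts (by lia) (fun w hw ↦ hTn w (hST hw)) hS, ?_⟩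
  rw [Set.ncard_coe_finset]
  calc 2 ^ ((n - 566) / 49) ≤ T.card := hT
    _ ≤ S.card * (2 * (20 * n ^ 2) + 1) := hcard
    _ = S.card * (40 * n ^ 2 + 1) := by ring

end Conflicts

theorem one_point_zero_one_pow_le_two_pow (n : ℕ) : (1.01 : ℝ) ^ n ≤ 2 ^ (n / 69 + 1) :=
  calc (1.01 : ℝ) ^ n ≤ 1.01 ^ (69 * (n / 69 + 1)) := pow_le_pow_right₀ (by norm_num) (by lia)
    _ = (1.01 ^ 69) ^ (n / 69 + 1) := pow_mul ..
    _ ≤ 2 ^ (n / 69 + 1) := by gcongr; norm_num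

theorem one_point_zero_one_pow_le_mul {n k : ℕ} (hn : 566 ≤ n)
    (h : 2 ^ ((n - 566) / 49) ≤ k * (40 * n ^ 2 + 1)) :
    (1.01 : ℝ) ^ n ≤ k * (16 * (60 * n ^ 2 + 1)) := by
  have hnat : 2 ^ (n / 69 + 1) ≤ k * (16 * (60 * n ^ 2 + 1)) := by
    rcases le_or_gt n 1800 with hn' | hn'
    · have hk : 0 < k := Nat.pos_of_mul_pos_right (Nat.two_pow_pos _ |>.trans_le h)
      calc 2 ^ (n / 69 + 1) ≤ 2 ^ 27 := Nat.pow_le_pow_right two_pos (by lia)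
        _ ≤ 1 * (16 * (60 * 566 ^ 2 + 1)) := by norm_num
        _ ≤ k * (16 * (60 * n ^ 2 + 1)) := by gcongr; exact hk
    · calc 2 ^ (n / 69 + 1) ≤ 2 ^ ((n - 566) / 49 + 4) := Nat.pow_le_pow_right two_pos (by lia)
        _ = 2 ^ ((n - 566) / 49) * 16 := by ring
        _ ≤ k * (40 * n ^ 2 + 1) * 16 := by gcongr
        _ = k * (16 * (40 * n ^ 2 + 1)) := by ring
        _ ≤ k * (16 * (60 * n ^ 2 + 1)) := by gcongr; norm_num
  exact (one_point_zero_one_pow_le_two_pow n).trans (mod_cast hnat)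

theorem exists_large_good_set_general (n : ℕ) (hn : 566 ≤ n) :
    ∃ S : Set (List (Fin 3)), GoodSet n S ∧
      (1.01 : ℝ) ^ n / (16 * (60 * (n : ℝ) ^ 2 + 1)) ≤ S.ncard := by
  obtain ⟨S, hS, hcard⟩ := exists_goodSet_two_pow_le hn
  refine ⟨S, hS, ?_⟩
  rw [div_le_iff₀ (by positivity)]
  exact one_point_zero_one_pow_le_mul hn hcard

/-- For every `n > 8750` there is an `n`-good set of size at least
`1.01 ^ n / (16 (60 n² + 1))`. -/
theorem exists_large_good_set (n : ℕ) (hn : 8750 < n) :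
    ∃ S : Set (List (Fin 3)), GoodSet n S ∧
      (1.01 : ℝ) ^ n / (16 * (60 * (n : ℝ) ^ 2 + 1)) ≤ S.ncard :=
  exists_large_good_set_general n (by lia)
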